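/- arXiv:0708.2948 — 2 statements merged into one kernel-verified Lean document; each statement's English description precedes it below -/
import Mathlib

section
/- Let γ: ℝ/ℤ → ℝ³ be a C² injective closed curve parametrized by arc length (|γ′(s)| = 1 for all s, total length 1). Then the limit lim_{ε→0⁺} [ ∬_{{(s,t) : d(s,t) ≥ ε}} ds dt / |γ(s) − γ(t)|² − 2/ε ] exists, is finite, and equals −4 + ∬_{(ℝ/ℤ)²} ( 1/|γ(s) − γ(t)|² − 1/d(s,t)² ) ds dt, the latter integral also being finite. -/
open MeasureTheory

noncomputable section

/-- ℝ³ with the Euclidean norm. -/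
abbrev E3 := EuclideanSpace ℝ (Fin 3)

/-- The arc-length distance on ℝ/ℤ, written for parameters `s, t ∈ [0,1]`. -/
def arcd (s t : ℝ) : ℝ := min |s - t| (1 - |s - t|)

/-!
The subtracted term `1 / d²` is explicit: for `(s, t)` uniform on the unit square, `d (s, t)` is
uniform on `[0, 1/2]`, so that `∬_{d ≥ ε} 1 / d² = 2 ∫_ε^{1/2} x⁻² dx = 2 / ε - 4`. Hence the two
formulas agree as soon as `1 / |γ s - γ t|² - 1 / d²` is integrable. It is in fact bounded: near the
diagonal, a unit-speed curve whose velocity is `K`-Lipschitz satisfies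
`d (1 - (K d)² / 2) ≤ |γ s - γ t| ≤ d`, and away from it injectivity and compactness suffice.
-/

section Ohara

open Set Filter Topology
open scoped NNReal ENNReal

/-! ### The distribution of the arc-length distance -/

lemma continuous_arcd : Continuous fun p : ℝ × ℝ => arcd p.1 p.2 := by
  unfold arcd
  fun_prop

lemma arcd_eq_norm_coe_sub {s t : ℝ} (hst : |s - t| ≤ 1) :
    arcd s t = ‖((s - t : ℝ) : UnitAddCircle)‖ := by
  rw [UnitAddCircle.norm_eq, abs_sub_round_eq_min, arcd]
  set x := s - t
  obtain ⟨hx, hx'⟩ := abs_le.1 hst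
  rcases lt_or_ge x 0 with hneg | hnonneg
  · have hfract : Int.fract x = x + 1 :=
      Int.fract_eq_iff.2 ⟨by linarith, by linarith, -1, by push_cast; ring⟩
    rw [hfract, abs_of_neg hneg, min_comm]
    congr 1 <;> ring
  · rcases hx'.eq_or_lt with hone | hlt
    · simp [hone]
    · rw [Int.fract_eq_self.2 ⟨hnonneg, hlt⟩, abs_of_nonneg hnonneg]

lemma abs_sub_le_one_of_mem_unitSquare {p : ℝ × ℝ} (hp : p ∈ Icc (0 : ℝ) 1 ×ˢ Icc (0 : ℝ) 1) :
    |p.1 - p.2| ≤ 1 := by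
  obtain ⟨⟨hs, hs'⟩, ht, ht'⟩ := hp
  exact abs_le.2 ⟨by linarith, by linarith⟩

lemma measurePreserving_norm_addCircle (T : ℝ) [Fact (0 < T)] :
    MeasurePreserving (norm : AddCircle T → ℝ) volume
      ((2 : ℝ≥0∞) • volume.restrict (Icc 0 (T / 2))) := by
  refine ⟨measurable_norm, Measure.ext_of_Iic _ _ fun a => ?_⟩
  have hball : (norm : AddCircle T → ℝ) ⁻¹' Iic a = Metric.closedBall 0 a := by
    ext x
    simp
  have hinter : Iic a ∩ Icc 0 (T / 2) = Icc 0 (min a (T / 2)) := by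
    ext x
    simp only [mem_inter_iff, mem_Iic, mem_Icc, le_min_iff]
    tauto
  rw [Measure.map_apply measurable_norm measurableSet_Iic, hball, AddCircle.volume_closedBall,
    Measure.smul_apply, Measure.restrict_apply measurableSet_Iic, hinter, Real.volume_Icc,
    smul_eq_mul, ← ENNReal.ofReal_ofNat, ← ENNReal.ofReal_mul zero_le_two, sub_zero,
    mul_min_of_nonneg _ _ zero_le_two, mul_div_cancel₀ T two_ne_zero, min_comm]

lemma measurePreserving_coe_unitAddCircle :
    MeasurePreserving ((↑) : ℝ → UnitAddCircle) (volume.restrict (Icc 0 1)) volume := by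
  rw [← restrict_Ioc_eq_restrict_Icc]
  simpa using UnitAddCircle.measurePreserving_mk 0

lemma measurePreserving_arcd :
    MeasurePreserving (fun p : ℝ × ℝ => arcd p.1 p.2)
      (volume.restrict (Icc 0 1 ×ˢ Icc 0 1))
      ((2 : ℝ≥0∞) • volume.restrict (Icc 0 (1 / 2))) := by
  have : IsProbabilityMeasure (volume : Measure UnitAddCircle) := ⟨UnitAddCircle.measure_univ⟩
  have hsub : MeasurePreserving (fun z : UnitAddCircle × UnitAddCircle => z.1 - z.2)
      (volume.prod volume) volume :=
    measurePreserving_fst.comp (measurePreserving_sub_prod volume volume)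
  have hcoe := measurePreserving_coe_unitAddCircle.prod measurePreserving_coe_unitAddCircle
  rw [Measure.prod_restrict, ← Measure.volume_eq_prod] at hcoe
  have hnorm := (measurePreserving_norm_addCircle 1).comp (hsub.comp hcoe)
  refine ⟨continuous_arcd.measurable, hnorm.map_eq ▸ Measure.map_congr ?_⟩
  filter_upwards [ae_restrict_mem (measurableSet_Icc.prod measurableSet_Icc)] with p hp
  exact arcd_eq_norm_coe_sub (abs_sub_le_one_of_mem_unitSquare hp)

lemma ae_arcd_pos : ∀ᵐ p ∂volume.restrict (Icc (0 : ℝ) 1 ×ˢ Icc (0 : ℝ) 1), 0 < arcd p.1 p.2 := by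
  refine measurePreserving_arcd.quasiMeasurePreserving.ae (p := fun x => 0 < x) ?_
  refine Measure.ae_smul_measure ?_ 2
  rw [← restrict_Ioc_eq_restrict_Icc]
  exact (ae_restrict_mem measurableSet_Ioc).mono fun x hx => hx.1

/-! ### Renormalization of the singularity -/

lemma measurableSet_le_arcd (ε : ℝ) : MeasurableSet {p : ℝ × ℝ | ε ≤ arcd p.1 p.2} :=
  (isClosed_le continuous_const continuous_arcd).measurableSet

lemma aecover_le_arcd :
    AECover (volume.restrict (Icc (0 : ℝ) 1 ×ˢ Icc (0 : ℝ) 1)) (𝓝[>] 0)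
      fun ε : ℝ => {p : ℝ × ℝ | ε ≤ arcd p.1 p.2} where
  ae_eventually_mem := ae_arcd_pos.mono fun _ hp =>
    mem_nhdsWithin_of_mem_nhds (Iic_mem_nhds hp)
  measurableSet := measurableSet_le_arcd

lemma integrableOn_one_div_arcd_sq {ε : ℝ} (hε : 0 < ε) :
    IntegrableOn (fun p : ℝ × ℝ => 1 / arcd p.1 p.2 ^ 2) {p | ε ≤ arcd p.1 p.2}
      (volume.restrict (Icc 0 1 ×ˢ Icc 0 1)) := by
  have hmeas : Measurable fun p : ℝ × ℝ => 1 / arcd p.1 p.2 ^ 2 :=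
    measurable_const.div (continuous_arcd.measurable.pow_const 2)
  have : IsFiniteMeasure (volume.restrict (Icc (0 : ℝ) 1 ×ˢ Icc (0 : ℝ) 1)) :=
    isFiniteMeasure_restrict.2 (isCompact_Icc.prod isCompact_Icc).measure_ne_top
  refine Measure.integrableOn_of_bounded (M := 1 / ε ^ 2) (measure_ne_top _ _)
    hmeas.aestronglyMeasurable ?_
  filter_upwards [ae_restrict_mem (measurableSet_le_arcd ε)] with p (hp : ε ≤ arcd p.1 p.2)
  rw [Real.norm_of_nonneg (by positivity)]
  gcongr

lemma integral_one_div_sq {a b : ℝ} (hab : (0 : ℝ) ∉ uIcc a b) :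
    ∫ x in a..b, 1 / x ^ 2 = 1 / a - 1 / b := by
  have hzpow : ∀ x : ℝ, 1 / x ^ 2 = x ^ (-2 : ℤ) := fun x => by
    rw [zpow_neg, one_div, zpow_ofNat]
  simp only [hzpow]
  rw [integral_zpow (Or.inr ⟨by norm_num, hab⟩)]
  norm_num
  ring

lemma setIntegral_one_div_arcd_sq {ε : ℝ} (hε : 0 < ε) (hε' : ε ≤ 1 / 2) :
    ∫ p in {p : ℝ × ℝ | ε ≤ arcd p.1 p.2}, 1 / arcd p.1 p.2 ^ 2
      ∂volume.restrict (Icc 0 1 ×ˢ Icc 0 1) = 2 / ε - 4 := by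
  have hmeas : Measurable fun x : ℝ => 1 / x ^ 2 := by fun_prop
  have hinter : Ici ε ∩ Icc 0 (1 / 2) = Icc ε (1 / 2) := by
    ext x
    simp only [mem_inter_iff, mem_Ici, mem_Icc]
    grind
  have hzero : (0 : ℝ) ∉ uIcc ε (1 / 2) := by
    rw [uIcc_of_le hε']
    exact fun h => hε.not_ge h.1
  calc _ = ∫ x in Ici ε, 1 / x ^ 2 ∂((2 : ℝ≥0∞) • volume.restrict (Icc 0 (1 / 2))) := by
        rw [← measurePreserving_arcd.map_eq, setIntegral_map measurableSet_Ici
          hmeas.aestronglyMeasurable continuous_arcd.aemeasurable]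
        rfl
    _ = 2 * ∫ x in ε..1 / 2, 1 / x ^ 2 := by
        rw [Measure.restrict_smul, integral_smul_measure, Measure.restrict_restrict
          measurableSet_Ici, hinter, integral_Icc_eq_integral_Ioc,
          ← intervalIntegral.integral_of_le hε', ENNReal.toReal_ofNat, smul_eq_mul]
    _ = 2 / ε - 4 := by
        rw [integral_one_div_sq hzero]
        ring

theorem tendsto_setIntegral_le_arcd_sub_two_div {f : ℝ × ℝ → ℝ}
    (hf : IntegrableOn (fun p => f p - 1 / arcd p.1 p.2 ^ 2) (Icc 0 1 ×ˢ Icc 0 1)) :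
    Tendsto
      (fun ε : ℝ =>
        (∫ p in {p : ℝ × ℝ | p ∈ Icc (0 : ℝ) 1 ×ˢ Icc (0 : ℝ) 1 ∧ ε ≤ arcd p.1 p.2}, f p) - 2 / ε)
      (𝓝[>] 0)
      (𝓝 (-4 + ∫ p in Icc (0 : ℝ) 1 ×ˢ Icc (0 : ℝ) 1, (f p - 1 / arcd p.1 p.2 ^ 2))) := by
  refine ((aecover_le_arcd.integral_tendsto_of_countably_generated hf).const_add (-4)).congr' ?_
  filter_upwards [Ioc_mem_nhdsGT (one_half_pos (α := ℝ))] with ε hε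
  have hset : {p : ℝ × ℝ | p ∈ Icc (0 : ℝ) 1 ×ˢ Icc (0 : ℝ) 1 ∧ ε ≤ arcd p.1 p.2} =
      {p | ε ≤ arcd p.1 p.2} ∩ Icc 0 1 ×ˢ Icc 0 1 := inter_comm _ _
  have hsplit := integral_add hf.integrableOn (integrableOn_one_div_arcd_sq hε.1)
  simp only [sub_add_cancel] at hsplit
  rw [hset, ← Measure.restrict_restrict (measurableSet_le_arcd ε), hsplit,
    setIntegral_one_div_arcd_sq hε.1 hε.2]
  ring

/-! ### Chords of unit-speed curves -/

lemma abs_one_div_sq_sub_one_div_sq_le {K r h : ℝ} (hr : 0 ≤ r) (hrh : r ≤ h)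
    (hKh : (K * h) ^ 2 ≤ 1) (hlow : h * (1 - (K * h) ^ 2 / 2) ≤ r) :
    |1 / r ^ 2 - 1 / h ^ 2| ≤ 4 * K ^ 2 := by
  rcases (hr.trans hrh).eq_or_lt with rfl | hh
  · rw [le_antisymm hrh hr, sub_self, abs_zero]
    positivity
  have hhalf : h / 2 ≤ r :=
    calc h / 2 = h * (1 - 1 / 2) := by ring
      _ ≤ h * (1 - (K * h) ^ 2 / 2) := by gcongr
      _ ≤ r := hlow
  have hr' : 0 < r := by linarith
  have hsq_sub : h ^ 2 - r ^ 2 ≤ K ^ 2 * h ^ 4 :=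
    calc h ^ 2 - r ^ 2 = (h - r) * (h + r) := by ring
      _ ≤ (K ^ 2 * h ^ 3 / 2) * (2 * h) := by gcongr <;> linarith
      _ = K ^ 2 * h ^ 4 := by ring
  have hdiff : 1 / r ^ 2 - 1 / h ^ 2 = (h ^ 2 - r ^ 2) / (r ^ 2 * h ^ 2) := by field_simp
  have hnonneg : 0 ≤ h ^ 2 - r ^ 2 := sub_nonneg.2 (by gcongr)
  rw [hdiff, abs_of_nonneg (by positivity), div_le_iff₀ (by positivity)]
  calc h ^ 2 - r ^ 2 ≤ K ^ 2 * h ^ 4 := hsq_sub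
    _ = 4 * K ^ 2 * ((h / 2) ^ 2 * h ^ 2) := by ring
    _ ≤ 4 * K ^ 2 * (r ^ 2 * h ^ 2) := by gcongr

variable {E : Type*} [NormedAddCommGroup E] [InnerProductSpace ℝ E]
  {γ γ' : ℝ → E} {K : ℝ≥0}

lemma inner_eq_one_sub_norm_sub_sq_div_two {v w : E} (hv : ‖v‖ = 1) (hw : ‖w‖ = 1) :
    inner ℝ v w = 1 - ‖v - w‖ ^ 2 / 2 := by
  rw [norm_sub_sq_real, hv, hw]
  ring

lemma norm_sub_le_abs_sub_of_unit_speed (hderiv : ∀ s, HasDerivAt γ (γ' s) s)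
    (hunit : ∀ s, ‖γ' s‖ = 1) (s t : ℝ) : ‖γ s - γ t‖ ≤ |s - t| := by
  simpa using convex_univ.norm_image_sub_le_of_norm_hasDerivWithin_le (C := 1)
    (fun x _ => (hderiv x).hasDerivWithinAt) (fun x _ => (hunit x).le) (mem_univ t) (mem_univ s)

/-- The projection of the chord to the line spanned by `γ' s` is already this long. -/
lemma mul_one_sub_sq_le_norm_sub_of_unit_speed (hderiv : ∀ s, HasDerivAt γ (γ' s) s)
    (hunit : ∀ s, ‖γ' s‖ = 1) (hlip : LipschitzWith K γ') (s t : ℝ) :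
    |s - t| * (1 - (K * |s - t|) ^ 2 / 2) ≤ ‖γ s - γ t‖ := by
  wlog hst : s ≤ t generalizing s t
  · rw [abs_sub_comm, norm_sub_rev]
    exact this t s (le_of_not_ge hst)
  rw [abs_sub_comm, norm_sub_rev, abs_of_nonneg (sub_nonneg.2 hst)]
  have hproj (u : ℝ) : HasDerivAt (fun u => inner ℝ (γ' s) (γ u)) (inner ℝ (γ' s) (γ' u)) u := by
    simpa using (hasDerivAt_const u (γ' s)).inner ℝ (hderiv u)
  have hslope : ∀ u ∈ interior (Icc s t),
      1 - (K * (t - s)) ^ 2 / 2 ≤ deriv (fun u => inner ℝ (γ' s) (γ u)) u := by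
    intro u hu
    rw [interior_Icc] at hu
    have hvel : ‖γ' s - γ' u‖ ≤ K * (t - s) := by
      refine (hlip.norm_sub_le s u).trans ?_
      rw [Real.norm_eq_abs, abs_sub_comm, abs_of_pos (sub_pos.2 hu.1)]
      gcongr
      exact hu.2.le
    rw [(hproj u).deriv, inner_eq_one_sub_norm_sub_sq_div_two (hunit s) (hunit u)]
    gcongr
  calc (t - s) * (1 - (K * (t - s)) ^ 2 / 2)
      = (1 - (K * (t - s)) ^ 2 / 2) * (t - s) := mul_comm _ _
    _ ≤ inner ℝ (γ' s) (γ t) - inner ℝ (γ' s) (γ s) :=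
        (convex_Icc s t).mul_sub_le_image_sub_of_le_deriv
          (fun u _ => (hproj u).continuousAt.continuousWithinAt)
          (fun u _ => (hproj u).differentiableAt.differentiableWithinAt) hslope
          s (left_mem_Icc.2 hst) t (right_mem_Icc.2 hst) hst
    _ = inner ℝ (γ' s) (γ t - γ s) := (inner_sub_right _ _ _).symm
    _ ≤ ‖γ' s‖ * ‖γ t - γ s‖ := real_inner_le_norm _ _
    _ = ‖γ t - γ s‖ := by rw [hunit, one_mul]

lemma abs_one_div_norm_sub_sq_sub_one_div_sq_le (hderiv : ∀ s, HasDerivAt γ (γ' s) s)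
    (hunit : ∀ s, ‖γ' s‖ = 1) (hlip : LipschitzWith K γ') {s t : ℝ} (hst : K * |s - t| ≤ 1) :
    |1 / ‖γ s - γ t‖ ^ 2 - 1 / |s - t| ^ 2| ≤ 4 * (K : ℝ) ^ 2 :=
  abs_one_div_sq_sub_one_div_sq_le (norm_nonneg _)
    (norm_sub_le_abs_sub_of_unit_speed hderiv hunit s t)
    (pow_le_one₀ (by positivity) hst)
    (mul_one_sub_sq_le_norm_sub_of_unit_speed hderiv hunit hlip s t)

lemma periodic_deriv {F : Type*} [NormedAddCommGroup F] [NormedSpace ℝ F] {f : ℝ → F} {T : ℝ}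
    (hper : Function.Periodic f T) : Function.Periodic (deriv f) T := fun x => by
  rw [← deriv_comp_add_const, hper.funext]

lemma exists_lipschitzWith_of_contDiff_one_of_periodic {F : Type*} [NormedAddCommGroup F]
    [NormedSpace ℝ F] {f : ℝ → F} {T : ℝ} (hT : T ≠ 0) (hf : ContDiff ℝ 1 f)
    (hper : Function.Periodic f T) : ∃ L : ℝ≥0, LipschitzWith L f := by
  have hbounded := (periodic_deriv hper).isBounded_of_continuous hT (hf.continuous_deriv le_rfl)
  obtain ⟨L, -, hL⟩ := hbounded.exists_pos_norm_le
  exact ⟨L.toNNReal, lipschitzWith_of_nnnorm_deriv_le (hf.differentiable one_ne_zero) fun x =>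
    NNReal.coe_le_coe.1 ((hL _ (mem_range_self x)).trans (Real.le_coe_toNNReal L))⟩

/-! ### Integrability of the energy density -/

lemma exists_eq_and_abs_sub_eq_arcd {α : Type*} {f : ℝ → α} (hper : Function.Periodic f 1)
    {s t : ℝ} (hst : |s - t| ≤ 1) : ∃ t', f t' = f t ∧ |s - t'| = arcd s t := by
  refine ⟨t + round (s - t) * 1, hper.int_mul _ t, ?_⟩
  rw [arcd_eq_norm_coe_sub hst, UnitAddCircle.norm_eq, mul_one, sub_add_eq_sub_sub]

lemma ne_of_arcd_pos {α : Type*} {f : ℝ → α}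
    (hinj : ∀ s t, f s = f t → ∃ n : ℤ, s - t = n) {s t : ℝ} (hst : |s - t| ≤ 1)
    (hpos : 0 < arcd s t) : f s ≠ f t := by
  intro heq
  obtain ⟨n, hn⟩ := hinj s t heq
  rw [arcd_eq_norm_coe_sub hst, UnitAddCircle.norm_eq, hn, round_intCast, sub_self,
    abs_zero] at hpos
  exact hpos.false

lemma continuousOn_one_div_norm_sub_sq_sub_one_div_arcd_sq {F : Type*} [NormedAddCommGroup F]
    {f : ℝ → F} (hcont : Continuous f) (hinj : ∀ s t, f s = f t → ∃ n : ℤ, s - t = n) :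
    ContinuousOn (fun p : ℝ × ℝ => 1 / ‖f p.1 - f p.2‖ ^ 2 - 1 / arcd p.1 p.2 ^ 2)
      {p | p ∈ Icc (0 : ℝ) 1 ×ˢ Icc (0 : ℝ) 1 ∧ 0 < arcd p.1 p.2} := by
  refine ContinuousOn.sub (continuousOn_const.div (by fun_prop) ?_)
    (continuousOn_const.div (continuous_arcd.pow 2).continuousOn ?_)
  · rintro p ⟨hp, hpos⟩
    exact pow_ne_zero 2 (norm_ne_zero_iff.2 (sub_ne_zero.2
      (ne_of_arcd_pos hinj (abs_sub_le_one_of_mem_unitSquare hp) hpos)))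
  · rintro p ⟨-, hpos⟩
    exact pow_ne_zero 2 hpos.ne'

lemma exists_abs_one_div_norm_sub_sq_sub_one_div_arcd_sq_le
    (hderiv : ∀ s, HasDerivAt γ (γ' s) s) (hunit : ∀ s, ‖γ' s‖ = 1) (hlip : LipschitzWith K γ')
    (hper : Function.Periodic γ 1) (hinj : ∀ s t, γ s = γ t → ∃ n : ℤ, s - t = n) :
    ∃ C : ℝ, ∀ p ∈ Icc (0 : ℝ) 1 ×ˢ Icc (0 : ℝ) 1,
      |1 / ‖γ p.1 - γ p.2‖ ^ 2 - 1 / arcd p.1 p.2 ^ 2| ≤ C := by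
  have hcont : Continuous γ := continuous_iff_continuousAt.2 fun s => (hderiv s).continuousAt
  have hfar_compact : IsCompact
      ((Icc (0 : ℝ) 1 ×ˢ Icc (0 : ℝ) 1) ∩ {p : ℝ × ℝ | 1 ≤ K * arcd p.1 p.2}) :=
    (isCompact_Icc.prod isCompact_Icc).inter_right
      (isClosed_le continuous_const (continuous_const.mul continuous_arcd))
  have hfar_pos : ∀ p : ℝ × ℝ, 1 ≤ K * arcd p.1 p.2 → 0 < arcd p.1 p.2 := fun p hp =>
    pos_of_mul_pos_right (one_pos.trans_le hp) K.coe_nonneg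
  obtain ⟨C, hC⟩ := hfar_compact.exists_bound_of_continuousOn
    ((continuousOn_one_div_norm_sub_sq_sub_one_div_arcd_sq hcont hinj).mono
      fun p hp => ⟨hp.1, hfar_pos p hp.2⟩)
  refine ⟨max C (4 * K ^ 2), fun p hp => ?_⟩
  rcases le_total 1 (K * arcd p.1 p.2) with hfar | hnear
  · exact le_max_of_le_left (hC p ⟨hp, hfar⟩)
  · obtain ⟨t, ht, hdist⟩ :=
      exists_eq_and_abs_sub_eq_arcd hper (abs_sub_le_one_of_mem_unitSquare hp)
    rw [← hdist] at hnear ⊢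
    rw [← ht]
    exact le_max_of_le_right
      (abs_one_div_norm_sub_sq_sub_one_div_sq_le hderiv hunit hlip hnear)

lemma integrableOn_one_div_norm_sub_sq_sub_one_div_arcd_sq
    (hderiv : ∀ s, HasDerivAt γ (γ' s) s) (hunit : ∀ s, ‖γ' s‖ = 1) (hlip : LipschitzWith K γ')
    (hper : Function.Periodic γ 1) (hinj : ∀ s t, γ s = γ t → ∃ n : ℤ, s - t = n) :
    IntegrableOn (fun p : ℝ × ℝ => 1 / ‖γ p.1 - γ p.2‖ ^ 2 - 1 / arcd p.1 p.2 ^ 2)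
      (Icc 0 1 ×ˢ Icc 0 1) := by
  obtain ⟨C, hC⟩ := exists_abs_one_div_norm_sub_sq_sub_one_div_arcd_sq_le
    hderiv hunit hlip hper hinj
  have hcont : Continuous γ := continuous_iff_continuousAt.2 fun s => (hderiv s).continuousAt
  have hchord : Continuous fun p : ℝ × ℝ => ‖γ p.1 - γ p.2‖ ^ 2 := by fun_prop
  have hmeas : Measurable fun p : ℝ × ℝ => 1 / ‖γ p.1 - γ p.2‖ ^ 2 - 1 / arcd p.1 p.2 ^ 2 :=
    (measurable_const.div hchord.measurable).sub
      (measurable_const.div (continuous_arcd.pow 2).measurable)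
  exact Measure.integrableOn_of_bounded (isCompact_Icc.prod isCompact_Icc).measure_ne_top
    hmeas.aestronglyMeasurable
    ((ae_restrict_mem (measurableSet_Icc.prod measurableSet_Icc)).mono hC)

theorem ohara_energy_two_formulas_general
    (hderiv : ∀ s, HasDerivAt γ (γ' s) s) (hunit : ∀ s, ‖γ' s‖ = 1) (hlip : LipschitzWith K γ')
    (hper : Function.Periodic γ 1) (hinj : ∀ s t, γ s = γ t → ∃ n : ℤ, s - t = n) :
    IntegrableOn (fun p : ℝ × ℝ => 1 / ‖γ p.1 - γ p.2‖ ^ 2 - 1 / arcd p.1 p.2 ^ 2)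
      (Icc 0 1 ×ˢ Icc 0 1) ∧
    Tendsto
      (fun ε : ℝ =>
        (∫ p in {p : ℝ × ℝ | p ∈ Icc (0 : ℝ) 1 ×ˢ Icc (0 : ℝ) 1 ∧ ε ≤ arcd p.1 p.2},
            1 / ‖γ p.1 - γ p.2‖ ^ 2) - 2 / ε)
      (𝓝[>] 0)
      (𝓝 (-4 + ∫ p in Icc (0 : ℝ) 1 ×ˢ Icc (0 : ℝ) 1,
          (1 / ‖γ p.1 - γ p.2‖ ^ 2 - 1 / arcd p.1 p.2 ^ 2))) :=
  have hint := integrableOn_one_div_norm_sub_sq_sub_one_div_arcd_sq hderiv hunit hlip hper hinj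
  ⟨hint, tendsto_setIntegral_le_arcd_sub_two_div hint⟩

end Ohara

/-- O'Hara's energy `E⁽²⁾∘`: for a C² injective closed curve of length 1 parametrized by
arc length, the renormalized limit
`lim_{ε→0⁺} [ ∬_{d(s,t) ≥ ε} ds dt/|γ(s)−γ(t)|² − 2/ε ]` exists and equals
`−4 + ∬ ( 1/|γ(s)−γ(t)|² − 1/d(s,t)² ) ds dt`, the latter integrand being integrable. -/
theorem ohara_energy_two_formulas (γ : ℝ → E3)
    (hC2 : ContDiff ℝ 2 γ)
    (hper : Function.Periodic γ 1)
    (hinj : ∀ s t : ℝ, γ s = γ t → ∃ n : ℤ, s - t = n)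
    (hunit : ∀ s : ℝ, ‖deriv γ s‖ = 1) :
    IntegrableOn
      (fun p : ℝ × ℝ => 1 / ‖γ p.1 - γ p.2‖ ^ 2 - 1 / arcd p.1 p.2 ^ 2)
      (Set.Icc 0 1 ×ˢ Set.Icc 0 1) ∧
    Filter.Tendsto
      (fun ε : ℝ =>
        (∫ p in {p : ℝ × ℝ | p ∈ Set.Icc (0:ℝ) 1 ×ˢ Set.Icc (0:ℝ) 1 ∧ ε ≤ arcd p.1 p.2},
            1 / ‖γ p.1 - γ p.2‖ ^ 2) - 2 / ε)
      (nhdsWithin 0 (Set.Ioi 0))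
      (nhds (-4 + ∫ p in Set.Icc (0:ℝ) 1 ×ˢ Set.Icc (0:ℝ) 1,
          (1 / ‖γ p.1 - γ p.2‖ ^ 2 - 1 / arcd p.1 p.2 ^ 2))) := by
  have hdiff : Differentiable ℝ γ := hC2.differentiable two_ne_zero
  have hC1 : ContDiff ℝ 1 (deriv γ) := ContDiff.deriv' hC2
  obtain ⟨K, hK⟩ :=
    exists_lipschitzWith_of_contDiff_one_of_periodic one_ne_zero hC1 (periodic_deriv hper)
  exact ohara_energy_two_formulas_general (fun s => (hdiff s).hasDerivAt) hunit hK hper hinj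
end
end

section
/- Let γ: ℝ/ℤ → ℝ³ be a C² embedding (injective with nowhere-vanishing derivative), c ∈ ℝ³ a point not in the image of γ, and r > 0. Then E(I_{c,r} ∘ γ) = E(γ), where I_{c,r} is the inversion in the sphere of center c and radius r. (Möbius invariance of the energy E⁽²⁾, Freedman–He–Wang.) -/
open MeasureTheory

noncomputable section

/-- Inversion in the sphere of center `c` and radius `r`. -/
def inv3 (c : E3) (r : ℝ) (x : E3) : E3 := c + (r ^ 2 / ‖x - c‖ ^ 2) • (x - c)

/-- The arc length of `γ` between the parameters `s` and `t`. -/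
def arcLen (γ : ℝ → E3) (s t : ℝ) : ℝ := |∫ u in s..t, ‖deriv γ u‖|

/-- The shorter arc-length distance along the closed curve `γ` (of period 1)
between the points with parameters `s, t ∈ [0,1]`. -/
def dArc (γ : ℝ → E3) (s t : ℝ) : ℝ :=
  min (arcLen γ s t) ((∫ u in (0:ℝ)..1, ‖deriv γ u‖) - arcLen γ s t)

/-- O'Hara's energy `E = E⁽²⁾` of a closed curve `γ : ℝ/ℤ → ℝ³`. -/
def energy (γ : ℝ → E3) : ℝ :=
  ∫ p in Set.Icc (0:ℝ) 1 ×ˢ Set.Icc (0:ℝ) 1,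
    (1 / ‖γ p.1 - γ p.2‖ ^ 2 - 1 / dArc γ p.1 p.2 ^ 2) *
      (‖deriv γ p.1‖ * ‖deriv γ p.2‖)

/-!
The inversion `η = I ∘ γ` has `|η'(s)| |η'(t)| / |η(s) - η(t)|² = |γ'(s)| |γ'(t)| / |γ(s) - γ(t)|²`,
so the energies of `γ` and `η` can differ only through their arc length terms
`|γ'(s)| |γ'(t)| / d(s, t)²`. As a function of `t`, each of these has a primitive with pole
`-1 / (t - s)` at `t = s`, up to a convergent error. The poles cancel in the difference of the two
curves, whose integral over `t` is therefore the difference of the increments `-4 |γ'(s)| / L(γ)`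
and `-4 |η'(s)| / L(η)` of the primitives. Each increment integrates to `-4` over `s`.

The energy integrals themselves converge because an arc of length `d` with curvature at most `K` has
a chord of length at least `d - K² d³ / 6`.
-/

open Filter Topology Set

section CircleDistance

variable {L x : ℝ}

/-- The distance between two points of a circle of length `L` that are joined by an arc of signed
length `x`, where `|x| ≤ L`. -/
def circleDist (L x : ℝ) : ℝ := min |x| (L - |x|)

/-- The odd primitive of `1 / circleDist L x ^ 2` on `0 < |x| < L`; the constant `4 / L` makes it
continuous at `|x| = L / 2`. -/
def circlePrimitive (L x : ℝ) : ℝ :=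
  if |x| ≤ L / 2 then -1 / x else SignType.sign x * (1 / (L - |x|) - 4 / L)

lemma circlePrimitive_neg (L x : ℝ) : circlePrimitive L (-x) = -circlePrimitive L x := by
  simp only [circlePrimitive, abs_neg, Left.sign_neg, SignType.coe_neg]
  split_ifs <;> ring

lemma circlePrimitive_of_abs_le (hx : |x| ≤ L / 2) : circlePrimitive L x = -1 / x := if_pos hx

lemma circlePrimitive_of_half_le (hL : 0 < L) (hx : L / 2 ≤ x) :
    circlePrimitive L x = 1 / (L - x) - 4 / L := by
  have hx0 : 0 < x := by linarith
  rcases hx.eq_or_lt with rfl | hlt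
  · rw [circlePrimitive_of_abs_le (abs_of_pos hx0).le]
    field_simp
    ring
  · rw [circlePrimitive, abs_of_pos hx0, if_neg hlt.not_ge, sign_pos hx0, SignType.coe_one, one_mul]

lemma circlePrimitive_sub_self_sub (hx0 : 0 < x) (hxL : x < L) :
    circlePrimitive L x - circlePrimitive L (x - L) = -4 / L := by
  have hL : 0 < L := hx0.trans hxL
  rw [← neg_sub L x, circlePrimitive_neg]
  rcases le_total x (L / 2) with h | h
  · rw [circlePrimitive_of_abs_le (by rwa [abs_of_pos hx0]),
      circlePrimitive_of_half_le hL (by linarith)]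
    ring
  · rw [circlePrimitive_of_half_le hL h,
      circlePrimitive_of_abs_le (by rw [abs_of_pos (sub_pos.2 hxL)]; linarith)]
    ring

lemma hasDerivAt_circlePrimitive_of_pos (hx0 : 0 < x) (hxL : x < L) :
    HasDerivAt (circlePrimitive L) (1 / circleDist L x ^ 2) x := by
  have hL : 0 < L := hx0.trans hxL
  have hleft (h : x ≤ L / 2) :
      HasDerivWithinAt (circlePrimitive L) (1 / circleDist L x ^ 2) (Icc 0 (L / 2)) x := by
    have hder : HasDerivAt (fun y : ℝ => -1 / y) (1 / circleDist L x ^ 2) x := by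
      rw [circleDist, abs_of_pos hx0, min_eq_left (by linarith)]
      simpa [neg_div] using! (hasDerivAt_inv hx0.ne').neg
    refine hder.hasDerivWithinAt.congr_of_mem (fun y hy => ?_) ⟨hx0.le, h⟩
    exact circlePrimitive_of_abs_le (by rw [abs_of_nonneg hy.1]; exact hy.2)
  have hright (h : L / 2 ≤ x) :
      HasDerivWithinAt (circlePrimitive L) (1 / circleDist L x ^ 2) (Ici (L / 2)) x := by
    have hder : HasDerivAt (fun y : ℝ => 1 / (L - y) - 4 / L) (1 / circleDist L x ^ 2) x := by
      rw [circleDist, abs_of_pos hx0, min_eq_right (by linarith)]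
      simpa using! (((hasDerivAt_id x).const_sub L).inv (sub_ne_zero.2 hxL.ne')).sub_const (4 / L)
    exact hder.hasDerivWithinAt.congr_of_mem (fun y hy => circlePrimitive_of_half_le hL hy) h
  rcases lt_trichotomy x (L / 2) with h | h | h
  · exact (hleft h.le).hasDerivAt (Icc_mem_nhds hx0 h)
  · refine ((hleft h.le).union (hright h.ge)).hasDerivAt ?_
    rw [Icc_union_Ici_eq_Ici (by positivity)]
    exact Ici_mem_nhds hx0
  · exact (hright h.le).hasDerivAt (Ici_mem_nhds h)

lemma hasDerivAt_circlePrimitive (hx0 : x ≠ 0) (hxL : |x| < L) :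
    HasDerivAt (circlePrimitive L) (1 / circleDist L x ^ 2) x := by
  rcases hx0.lt_or_gt with hneg | hpos
  · have hder := ((hasDerivAt_circlePrimitive_of_pos (neg_pos.2 hneg)
      (by rwa [← abs_of_neg hneg])).scomp x (hasDerivAt_neg x)).neg
    have heq : circlePrimitive L = -(circlePrimitive L ∘ Neg.neg) :=
      funext fun y => by simp [circlePrimitive_neg]
    rw [heq]
    simpa [circleDist] using hder
  · exact hasDerivAt_circlePrimitive_of_pos hpos (by rwa [← abs_of_pos hpos])

end CircleDistance

section ArcKernel

variable {S σ T τ : ℝ → ℝ} {a b s t σ' τ' : ℝ}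

/-- The subtracted term `σ(s) σ(t) / d(s, t)²` of the energy of a closed curve of length `L` with
arc length function `S` and speed `σ`. -/
def arcKernel (L : ℝ) (S σ : ℝ → ℝ) (s t : ℝ) : ℝ :=
  1 / circleDist L (S t - S s) ^ 2 * (σ s * σ t)

lemma strictMono_of_hasDerivAt_of_pos (hS : ∀ x, HasDerivAt S (σ x) x) (hσ : ∀ x, 0 < σ x) :
    StrictMono S :=
  strictMono_of_deriv_pos fun x => (hS x).deriv.symm ▸ hσ x

lemma hasDerivAt_mul_circlePrimitive (hS : ∀ x, HasDerivAt S (σ x) x) (hmono : StrictMono S)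
    (hs : s ∈ Ioo a b) (ht : t ∈ Icc a b) (hts : t ≠ s) :
    HasDerivAt (fun t => σ s * circlePrimitive (S b - S a) (S t - S s))
      (arcKernel (S b - S a) S σ s t) t := by
  have habs : |S t - S s| < S b - S a := by
    have := hmono hs.1
    have := hmono hs.2
    have := hmono.monotone ht.1
    have := hmono.monotone ht.2
    rw [abs_lt]
    constructor <;> linarith
  have hder := ((hasDerivAt_circlePrimitive (sub_ne_zero.2 (hmono.injective.ne hts)) habs).comp t
    ((hS t).sub_const (S s))).const_mul (σ s)
  convert! hder using 1
  rw [arcKernel]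
  ring

lemma tendsto_sub_linear_div_sq (hS : ∀ x, HasDerivAt S (σ x) x) (hσ' : HasDerivAt σ σ' s) :
    Tendsto (fun t => (S t - S s - σ s * (t - s)) / (t - s) ^ 2) (𝓝[≠] s) (𝓝 (σ' / 2)) := by
  have hzero {f : ℝ → ℝ} (hf : Continuous f) (hfs : f s = 0) : Tendsto f (𝓝[≠] s) (𝓝 0) :=
    hfs ▸ hf.continuousAt.continuousWithinAt
  have hScont : Continuous S := continuous_iff_continuousAt.2 fun x => (hS x).continuousAt
  refine HasDerivAt.lhopital_zero_nhdsNE (f' := fun t => σ t - σ s) (g' := fun t => 2 * (t - s))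
    (.of_forall fun t => ?_) (.of_forall fun t => ?_) ?_
    (hzero (by fun_prop) (by ring)) (hzero (by fun_prop) (by ring)) ?_
  · simpa using! ((hS t).sub_const (S s)).sub (((hasDerivAt_id t).sub_const s).const_mul (σ s))
  · simpa using! ((hasDerivAt_id t).sub_const s).pow 2
  · filter_upwards [self_mem_nhdsWithin] with t ht
    exact mul_ne_zero two_ne_zero (sub_ne_zero.2 ht)
  · refine (hσ'.tendsto_slope.div_const 2).congr fun t => ?_
    rw [slope_def_field, div_div, mul_comm]

lemma tendsto_speed_div_sub_one_div (hS : ∀ x, HasDerivAt S (σ x) x) (hσs : σ s ≠ 0)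
    (hσ' : HasDerivAt σ σ' s) :
    Tendsto (fun t => σ s / (S t - S s) - 1 / (t - s)) (𝓝[≠] s) (𝓝 (-(σ' / 2) * (σ s)⁻¹)) := by
  have hslope : Tendsto (fun t => (slope S s t)⁻¹) (𝓝[≠] s) (𝓝 (σ s)⁻¹) :=
    (hS s).tendsto_slope.inv₀ hσs
  refine ((tendsto_sub_linear_div_sq hS hσ').neg.mul hslope).congr' ?_
  filter_upwards [self_mem_nhdsWithin, (hS s).eventually_ne hσs] with t ht hSt
  have : t - s ≠ 0 := sub_ne_zero.2 ht
  have : S t - S s ≠ 0 := sub_ne_zero.2 hSt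
  rw [slope_def_field]
  field_simp
  ring

/- Both primitives behave like `-1 / (t - s)` up to a convergent error, so the poles cancel. -/
lemma exists_tendsto_circlePrimitive_sub (hS : ∀ x, HasDerivAt S (σ x) x) (hσs : σ s ≠ 0)
    (hσ' : HasDerivAt σ σ' s) (hT : ∀ x, HasDerivAt T (τ x) x) (hτs : τ s ≠ 0)
    (hτ' : HasDerivAt τ τ' s) {L M : ℝ} (hL : 0 < L) (hM : 0 < M) :
    ∃ l, Tendsto (fun t => σ s * circlePrimitive L (S t - S s)
      - τ s * circlePrimitive M (T t - T s)) (𝓝[≠] s) (𝓝 l) := by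
  have hnear {R ρ : ℝ → ℝ} (hR : HasDerivAt R (ρ s) s) {N : ℝ} (hN : 0 < N) :
      ∀ᶠ t in 𝓝[≠] s, circlePrimitive N (R t - R s) = -1 / (R t - R s) := by
    have hzero : Tendsto (fun t => |R t - R s|) (𝓝[≠] s) (𝓝 0) := by
      simpa using (hR.continuousAt.tendsto.sub_const (R s)).abs.mono_left nhdsWithin_le_nhds
    filter_upwards [hzero.eventually_le_const (half_pos hN)] with t ht
    exact circlePrimitive_of_abs_le ht
  refine ⟨_, ((tendsto_speed_div_sub_one_div hT hτs hτ').sub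
    (tendsto_speed_div_sub_one_div hS hσs hσ')).congr' ?_⟩
  filter_upwards [hnear (hS s) hL, hnear (hT s) hM] with t hSt hTt
  rw [hSt, hTt]
  ring

lemma integral_eq_sub_of_hasDerivAt_of_tendsto_nhdsNE {E : Type*} [NormedAddCommGroup E]
    [NormedSpace ℝ E] [CompleteSpace E] {f f' : ℝ → E} {l : E} (hs : s ∈ Ioo a b)
    (hderiv : ∀ t ∈ Icc a b, t ≠ s → HasDerivAt f (f' t) t) (hlim : Tendsto f (𝓝[≠] s) (𝓝 l))
    (hint : IntervalIntegrable f' volume a b) : ∫ t in a..b, f' t = f b - f a := by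
  have hab : a ≤ b := (hs.1.trans hs.2).le
  have hupdate {t : ℝ} (ht : t ∈ Icc a b) (hts : t ≠ s) :
      HasDerivAt (Function.update f s l) (f' t) t :=
    (hderiv t ht hts).congr_of_eventuallyEq <| (eventually_ne_nhds hts).mono fun u hu =>
      Function.update_of_ne hu l f
  have hcont : ContinuousOn (Function.update f s l) (uIcc a b) := by
    rw [uIcc_of_le hab]
    intro t ht
    rcases eq_or_ne t s with rfl | hts
    · exact (continuousAt_update_same.2 hlim).continuousWithinAt
    · exact (hupdate ht hts).continuousAt.continuousWithinAt
  rw [integral_eq_of_hasDerivAt_off_countable _ f' (countable_singleton s) hcont ?_ hint,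
    Function.update_of_ne hs.2.ne', Function.update_of_ne hs.1.ne]
  rintro t ⟨ht, hts⟩
  rw [min_eq_left hab, max_eq_right hab] at ht
  exact hupdate (Ioo_subset_Icc_self ht) hts

lemma integral_arcKernel_sub (hS : ∀ x, HasDerivAt S (σ x) x) (hσ : ∀ x, 0 < σ x)
    (hσ' : HasDerivAt σ σ' s) (hT : ∀ x, HasDerivAt T (τ x) x) (hτ : ∀ x, 0 < τ x)
    (hτ' : HasDerivAt τ τ' s) (hs : s ∈ Ioo a b)
    (hint : IntervalIntegrable
      (fun t => arcKernel (S b - S a) S σ s t - arcKernel (T b - T a) T τ s t) volume a b) :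
    ∫ t in a..b, (arcKernel (S b - S a) S σ s t - arcKernel (T b - T a) T τ s t) =
      4 * (τ s / (T b - T a)) - 4 * (σ s / (S b - S a)) := by
  have hSmono := strictMono_of_hasDerivAt_of_pos hS hσ
  have hTmono := strictMono_of_hasDerivAt_of_pos hT hτ
  have hab : a < b := hs.1.trans hs.2
  obtain ⟨l, hl⟩ := exists_tendsto_circlePrimitive_sub hS (hσ s).ne' hσ' hT (hτ s).ne' hτ'
    (sub_pos.2 (hSmono hab)) (sub_pos.2 (hTmono hab))
  have hjump {R : ℝ → ℝ} (hR : StrictMono R) : circlePrimitive (R b - R a) (R b - R s) -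
      circlePrimitive (R b - R a) (R a - R s) = -4 / (R b - R a) := by
    have h := circlePrimitive_sub_self_sub (sub_pos.2 (hR hs.2)) (sub_lt_sub_left (hR hs.1) (R b))
    rwa [sub_sub_sub_cancel_left] at h
  rw [integral_eq_sub_of_hasDerivAt_of_tendsto_nhdsNE hs (fun t ht hts =>
    (hasDerivAt_mul_circlePrimitive hS hSmono hs ht hts).sub
      (hasDerivAt_mul_circlePrimitive hT hTmono hs ht hts)) hl hint]
  simp only [Pi.sub_apply]
  linear_combination σ s * hjump hSmono - τ s * hjump hTmono

lemma integral_speed_div_length (hS : ∀ x, HasDerivAt S (σ x) x) (hσ : Continuous σ)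
    (hne : S a ≠ S b) : ∫ s in a..b, σ s / (S b - S a) = 1 := by
  rw [intervalIntegral.integral_div, intervalIntegral.integral_eq_sub_of_hasDerivAt
    (fun x _ => hS x) (hσ.intervalIntegrable a b), div_self (sub_ne_zero.2 hne.symm)]

lemma setIntegral_arcKernel_sub_eq_zero (hS : ∀ x, HasDerivAt S (σ x) x) (hσ : ∀ x, 0 < σ x)
    (hσ' : Differentiable ℝ σ) (hT : ∀ x, HasDerivAt T (τ x) x) (hτ : ∀ x, 0 < τ x)
    (hτ' : Differentiable ℝ τ) (hab : a < b)
    (hint : IntegrableOn (fun p : ℝ × ℝ =>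
      arcKernel (S b - S a) S σ p.1 p.2 - arcKernel (T b - T a) T τ p.1 p.2)
      (Icc a b ×ˢ Icc a b)) :
    ∫ p in Icc a b ×ˢ Icc a b,
      (arcKernel (S b - S a) S σ p.1 p.2 - arcKernel (T b - T a) T τ p.1 p.2) = 0 := by
  have hinner : ∀ᵐ s ∂volume.restrict (Icc a b),
      ∫ t in Icc a b, (arcKernel (S b - S a) S σ s t - arcKernel (T b - T a) T τ s t) =
        4 * (τ s / (T b - T a)) - 4 * (σ s / (S b - S a)) := by
    have hmem : ∀ᵐ s ∂volume.restrict (Icc a b), s ∈ Ioo a b := by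
      rw [← restrict_Ioo_eq_restrict_Icc]
      exact ae_restrict_mem measurableSet_Ioo
    rw [IntegrableOn, Measure.volume_eq_prod, ← Measure.prod_restrict] at hint
    filter_upwards [hint.prod_right_ae, hmem] with s hsec hs
    rw [integral_Icc_eq_integral_Ioc, ← intervalIntegral.integral_of_le hab.le]
    exact integral_arcKernel_sub hS hσ (hσ' s).hasDerivAt hT hτ (hτ' s).hasDerivAt hs
      ((intervalIntegrable_iff_integrableOn_Icc_of_le hab.le).2 hsec)
  have hne {R ρ : ℝ → ℝ} (hR : ∀ x, HasDerivAt R (ρ x) x) (hρ : ∀ x, 0 < ρ x) : R a ≠ R b :=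
    (strictMono_of_hasDerivAt_of_pos hR hρ hab).ne
  have hσc := hσ'.continuous
  have hτc := hτ'.continuous
  rw [Measure.volume_eq_prod, setIntegral_prod _ hint, integral_congr_ae hinner,
    integral_Icc_eq_integral_Ioc, ← intervalIntegral.integral_of_le hab.le,
    intervalIntegral.integral_sub (Continuous.intervalIntegrable (by fun_prop) a b)
      (Continuous.intervalIntegrable (by fun_prop) a b),
    intervalIntegral.integral_const_mul, intervalIntegral.integral_const_mul,
    integral_speed_div_length hT hτc (hne hT hτ), integral_speed_div_length hS hσc (hne hS hσ),
    sub_self]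

end ArcKernel

section Curves

variable {F : Type*} [NormedAddCommGroup F]

lemma norm_sub_le_sub_of_hasDerivAt [NormedSpace ℝ F] {f f' : ℝ → F} {B B' : ℝ → ℝ}
    (hf : ∀ x, HasDerivAt f (f' x) x) (hB : ∀ x, HasDerivAt B (B' x) x)
    (hle : ∀ x, ‖f' x‖ ≤ B' x) {u v : ℝ} (huv : u ≤ v) : ‖f v - f u‖ ≤ B v - B u :=
  image_norm_le_of_norm_deriv_right_le_deriv_boundary (f := fun x => f x - f u)
    (fun x _ => ((hf x).sub_const (f u)).continuousAt.continuousWithinAt)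
    (fun x _ => ((hf x).sub_const (f u)).hasDerivWithinAt) (by simp)
    (fun x => (hB x).sub_const (B u)) (fun x _ => hle x) (right_mem_Icc.2 huv)

lemma periodic_deriv_s1 [NormedSpace ℝ F] {f : ℝ → F} {p : ℝ} (hf : Function.Periodic f p) :
    Function.Periodic (deriv f) p := fun x => by
  rw [← deriv_comp_add_const, hf.funext]

/-- The arc length of `γ` from the parameter `0` to the parameter `x`, negative for `x < 0`. -/
def arcLength [NormedSpace ℝ F] (γ : ℝ → F) (x : ℝ) : ℝ := ∫ u in (0 : ℝ)..x, ‖deriv γ u‖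

/-- The length of the shorter arc between the parameters `s, t ∈ [0, 1]` on a closed curve of
period `1`. -/
def shorterArc [NormedSpace ℝ F] (γ : ℝ → F) (s t : ℝ) : ℝ :=
  circleDist (∫ u in (0 : ℝ)..1, ‖deriv γ u‖) (∫ u in s..t, ‖deriv γ u‖)

/-- The integrand of `knotEnergy`. -/
def energyDensity [NormedSpace ℝ F] (γ : ℝ → F) (p : ℝ × ℝ) : ℝ :=
  (1 / ‖γ p.1 - γ p.2‖ ^ 2 - 1 / shorterArc γ p.1 p.2 ^ 2) * (‖deriv γ p.1‖ * ‖deriv γ p.2‖)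

/-- O'Hara's energy `E⁽²⁾` of a closed curve of period `1` in any normed space. -/
def knotEnergy [NormedSpace ℝ F] (γ : ℝ → F) : ℝ :=
  ∫ p in Icc (0 : ℝ) 1 ×ˢ Icc (0 : ℝ) 1, energyDensity γ p

/-- A regular closed `C²` curve, parametrized by `ℝ` with period `1`. -/
structure IsRegularLoop [NormedSpace ℝ F] (γ : ℝ → F) : Prop where
  contDiff : ContDiff ℝ 2 γ
  periodic : Function.Periodic γ 1
  deriv_ne_zero : ∀ s, deriv γ s ≠ 0

/-- A `C²` embedding of the circle `ℝ/ℤ`, parametrized by `ℝ` with period `1`. -/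
structure IsC2Knot [NormedSpace ℝ F] (γ : ℝ → F) : Prop extends IsRegularLoop γ where
  exists_int_of_eq : ∀ s t, γ s = γ t → ∃ n : ℤ, s - t = n

section ArcLength

variable [NormedSpace ℝ F] {γ : ℝ → F}

lemma integral_norm_deriv_eq_arcLength_sub (hγ : Continuous (deriv γ)) (s t : ℝ) :
    ∫ u in s..t, ‖deriv γ u‖ = arcLength γ t - arcLength γ s :=
  (intervalIntegral.integral_interval_sub_left (hγ.norm.intervalIntegrable 0 t)
    (hγ.norm.intervalIntegrable 0 s)).symm

lemma hasDerivAt_arcLength (hγ : Continuous (deriv γ)) (x : ℝ) :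
    HasDerivAt (arcLength γ) ‖deriv γ x‖ x :=
  (hγ.norm.integral_hasStrictDerivAt 0 x).hasDerivAt

lemma continuous_arcLength (hγ : Continuous (deriv γ)) : Continuous (arcLength γ) :=
  continuous_iff_continuousAt.2 fun x => (hasDerivAt_arcLength hγ x).continuousAt

lemma shorterArc_eq_circleDist (hγ : Continuous (deriv γ)) (s t : ℝ) :
    shorterArc γ s t =
      circleDist (arcLength γ 1 - arcLength γ 0) (arcLength γ t - arcLength γ s) := by
  rw [shorterArc, integral_norm_deriv_eq_arcLength_sub hγ, integral_norm_deriv_eq_arcLength_sub hγ]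

lemma shorterArc_comm (γ : ℝ → F) (s t : ℝ) : shorterArc γ s t = shorterArc γ t s := by
  rw [shorterArc, shorterArc, intervalIntegral.integral_symm t s, circleDist, circleDist, abs_neg]

lemma continuous_shorterArc (hγ : Continuous (deriv γ)) :
    Continuous fun p : ℝ × ℝ => shorterArc γ p.1 p.2 := by
  have := continuous_arcLength hγ
  simp only [shorterArc_eq_circleDist hγ, circleDist]
  fun_prop

lemma measurable_one_div_sq_sub_one_div_sq (hγ : Continuous γ) (hγ' : Continuous (deriv γ)) :
    Measurable fun p : ℝ × ℝ => 1 / ‖γ p.1 - γ p.2‖ ^ 2 - 1 / shorterArc γ p.1 p.2 ^ 2 := by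
  have hchord : Measurable fun p : ℝ × ℝ => ‖γ p.1 - γ p.2‖ :=
    Continuous.measurable (by fun_prop)
  have harc : Measurable fun p : ℝ × ℝ => shorterArc γ p.1 p.2 :=
    (continuous_shorterArc hγ').measurable
  fun_prop

lemma energyDensity_eq_sub_arcKernel (hγ : Continuous (deriv γ)) (s t : ℝ) :
    energyDensity γ (s, t) = 1 / ‖γ s - γ t‖ ^ 2 * (‖deriv γ s‖ * ‖deriv γ t‖) -
      arcKernel (arcLength γ 1 - arcLength γ 0) (arcLength γ) (fun x => ‖deriv γ x‖) s t := by
  rw [energyDensity, shorterArc_eq_circleDist hγ, arcKernel, sub_mul]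

end ArcLength

namespace IsRegularLoop

section NormedSpace

variable [NormedSpace ℝ F] {γ : ℝ → F}

lemma contDiff_deriv (hγ : IsRegularLoop γ) : ContDiff ℝ 1 (deriv γ) :=
  (contDiff_succ_iff_deriv.1 (one_add_one_eq_two (R := WithTop ℕ∞) ▸ hγ.contDiff)).2.2

lemma continuous_deriv (hγ : IsRegularLoop γ) : Continuous (deriv γ) := hγ.contDiff_deriv.continuous

lemma hasDerivAt (hγ : IsRegularLoop γ) (x : ℝ) : HasDerivAt γ (deriv γ x) x :=
  (hγ.contDiff.differentiable two_ne_zero x).hasDerivAt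

lemma norm_deriv_pos (hγ : IsRegularLoop γ) (x : ℝ) : 0 < ‖deriv γ x‖ :=
  norm_pos_iff.2 (hγ.deriv_ne_zero x)

lemma strictMono_arcLength (hγ : IsRegularLoop γ) : StrictMono (arcLength γ) :=
  strictMono_of_hasDerivAt_of_pos (hasDerivAt_arcLength hγ.continuous_deriv) hγ.norm_deriv_pos

lemma arcLength_add_one_sub (hγ : IsRegularLoop γ) (x : ℝ) :
    arcLength γ (x + 1) - arcLength γ x = arcLength γ 1 - arcLength γ 0 := by
  have h := ((periodic_deriv_s1 hγ.periodic).comp norm).intervalIntegral_add_eq x 0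
  simpa only [Function.comp_apply, zero_add,
    integral_norm_deriv_eq_arcLength_sub hγ.continuous_deriv] using h

/- The shorter arc from `s` to `t` either stays in `[0, 1]` or passes through `1`. -/
lemma exists_arc_eq_shorterArc (hγ : IsRegularLoop γ) {s t : ℝ} (hs : s ∈ Icc (0 : ℝ) 1)
    (ht : t ∈ Icc (0 : ℝ) 1) : ∃ u v, u ≤ v ∧ arcLength γ v - arcLength γ u = shorterArc γ s t ∧
      ‖γ v - γ u‖ = ‖γ s - γ t‖ := by
  wlog hst : s ≤ t generalizing s t
  · rw [shorterArc_comm, norm_sub_rev (γ s)]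
    exact this ht hs (le_of_not_ge hst)
  have hwrap : arcLength γ (s + 1) - arcLength γ t =
      arcLength γ 1 - arcLength γ 0 - (arcLength γ t - arcLength γ s) := by
    linarith [hγ.arcLength_add_one_sub s]
  rw [shorterArc_eq_circleDist hγ.continuous_deriv, circleDist,
    abs_of_nonneg (sub_nonneg.2 (hγ.strictMono_arcLength.monotone hst)), ← hwrap]
  rcases min_choice (arcLength γ t - arcLength γ s) (arcLength γ (s + 1) - arcLength γ t)
    with h | h
  · exact ⟨s, t, hst, h.symm, norm_sub_rev _ _⟩
  · exact ⟨t, s + 1, by linarith [hs.1, ht.2], h.symm, by rw [hγ.periodic s]⟩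

lemma norm_sub_le_shorterArc (hγ : IsRegularLoop γ) {s t : ℝ} (hs : s ∈ Icc (0 : ℝ) 1)
    (ht : t ∈ Icc (0 : ℝ) 1) : ‖γ s - γ t‖ ≤ shorterArc γ s t := by
  obtain ⟨u, v, huv, harc, hchord⟩ := hγ.exists_arc_eq_shorterArc hs ht
  rw [← harc, ← hchord]
  exact norm_sub_le_sub_of_hasDerivAt hγ.hasDerivAt (hasDerivAt_arcLength hγ.continuous_deriv)
    (fun x => le_rfl) huv

end NormedSpace

variable [InnerProductSpace ℝ F] {γ : ℝ → F}

lemma differentiable_norm_deriv (hγ : IsRegularLoop γ) : Differentiable ℝ fun x => ‖deriv γ x‖ :=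
  (hγ.contDiff_deriv.norm ℝ hγ.deriv_ne_zero).differentiable one_ne_zero

lemma contDiff_normalize_deriv (hγ : IsRegularLoop γ) :
    ContDiff ℝ 1 fun x => NormedSpace.normalize (deriv γ x) :=
  ((hγ.contDiff_deriv.norm ℝ hγ.deriv_ne_zero).inv fun x => (hγ.norm_deriv_pos x).ne').smul
    hγ.contDiff_deriv

/- `K` is a bound for the curvature, the speed of the unit tangent relative to arc length. -/
lemma exists_norm_normalize_deriv_sub_le (hγ : IsRegularLoop γ) : ∃ K > 0, ∀ u v, u ≤ v →
    ‖NormedSpace.normalize (deriv γ v) - NormedSpace.normalize (deriv γ u)‖ ≤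
      K * (arcLength γ v - arcLength γ u) := by
  set T : ℝ → F := fun x => NormedSpace.normalize (deriv γ x)
  have hT : ContDiff ℝ 1 T := hγ.contDiff_normalize_deriv
  have hTper : Function.Periodic T 1 := (periodic_deriv_s1 hγ.periodic).comp NormedSpace.normalize
  have hcurv : Continuous fun x => ‖deriv T x‖ / ‖deriv γ x‖ :=
    hT.continuous_deriv_one.norm.div hγ.continuous_deriv.norm fun x => (hγ.norm_deriv_pos x).ne'
  have hper : Function.Periodic (fun x => ‖deriv T x‖ / ‖deriv γ x‖) 1 :=
    ((periodic_deriv_s1 hTper).comp norm).div ((periodic_deriv_s1 hγ.periodic).comp norm)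
  obtain ⟨K, hK0, hK⟩ :=
    (hper.isBounded_of_continuous one_ne_zero hcurv).exists_pos_norm_le
  refine ⟨K, hK0, fun u v huv => ?_⟩
  have hle (x : ℝ) : ‖deriv T x‖ ≤ K * ‖deriv γ x‖ :=
    (div_le_iff₀ (hγ.norm_deriv_pos x)).1 ((le_abs_self _).trans (hK _ (mem_range_self x)))
  rw [mul_sub]
  exact norm_sub_le_sub_of_hasDerivAt
    (fun x => (hT.differentiable one_ne_zero x).hasDerivAt)
    (fun x => (hasDerivAt_arcLength hγ.continuous_deriv x).const_mul K) hle huv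

/- The component of the velocity along the initial tangent `T u` is
`‖γ'‖ (1 - ‖T x - T u‖² / 2)`; integrate from `u` to `v`. -/
lemma arcLength_sub_cube_le_norm_sub (hγ : IsRegularLoop γ) {K : ℝ}
    (hK : ∀ u v, u ≤ v → ‖NormedSpace.normalize (deriv γ v) - NormedSpace.normalize (deriv γ u)‖ ≤
      K * (arcLength γ v - arcLength γ u)) {u v : ℝ} (huv : u ≤ v) :
    arcLength γ v - arcLength γ u - K ^ 2 * (arcLength γ v - arcLength γ u) ^ 3 / 6 ≤
      ‖γ v - γ u‖ := by
  set T : ℝ → F := fun x => NormedSpace.normalize (deriv γ x)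
  have hT1 (x : ℝ) : ‖T x‖ = 1 := NormedSpace.norm_normalize_eq_one_iff.2 (hγ.deriv_ne_zero x)
  let ℓ (x : ℝ) : ℝ := arcLength γ x - arcLength γ u
  have hℓ (x : ℝ) : HasDerivAt ℓ ‖deriv γ x‖ x :=
    (hasDerivAt_arcLength hγ.continuous_deriv x).sub_const (arcLength γ u)
  have hinner (x : ℝ) (hx : u ≤ x) :
      ‖deriv γ x‖ * (1 - (K * ℓ x) ^ 2 / 2) ≤ inner ℝ (T u) (deriv γ x) := by
    have hvel : deriv γ x = ‖deriv γ x‖ • T x := (NormedSpace.norm_smul_normalize _).symm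
    have hcos : ‖T x - T u‖ ^ 2 = 2 - 2 * inner ℝ (T u) (T x) := by
      rw [norm_sub_sq_real, hT1, hT1, real_inner_comm]
      ring
    have hsq : ‖T x - T u‖ ^ 2 ≤ (K * ℓ x) ^ 2 := pow_le_pow_left₀ (norm_nonneg _) (hK u x hx) 2
    conv_rhs => rw [hvel, inner_smul_right]
    gcongr
    linarith
  have hmono : MonotoneOn
      (fun x => inner ℝ (T u) (γ x - γ u) - (ℓ x - K ^ 2 * ℓ x ^ 3 / 6)) (Icc u v) := by
    have hder (x : ℝ) : HasDerivAt
        (fun x => inner ℝ (T u) (γ x - γ u) - (ℓ x - K ^ 2 * ℓ x ^ 3 / 6))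
        (inner ℝ (T u) (deriv γ x) - ‖deriv γ x‖ * (1 - (K * ℓ x) ^ 2 / 2)) x := by
      have hproj := (hasDerivAt_const x (T u)).inner ℝ ((hγ.hasDerivAt x).sub_const (γ u))
      have hcubic := (hℓ x).sub ((((hℓ x).pow 3).const_mul (K ^ 2)).div_const 6)
      convert! hproj.sub hcubic using 1
      simp only [inner_zero_left, add_zero]
      ring
    refine monotoneOn_of_hasDerivWithinAt_nonneg (convex_Icc u v)
      (fun x _ => (hder x).continuousAt.continuousWithinAt)
      (fun x _ => (hder x).hasDerivWithinAt) fun x hx => ?_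
    exact sub_nonneg.2 (hinner x (interior_subset hx).1)
  have hproj : ℓ v - K ^ 2 * ℓ v ^ 3 / 6 ≤ inner ℝ (T u) (γ v - γ u) := by
    have h := hmono (left_mem_Icc.2 huv) (right_mem_Icc.2 huv) huv
    simpa [ℓ] using h
  calc ℓ v - K ^ 2 * ℓ v ^ 3 / 6 ≤ inner ℝ (T u) (γ v - γ u) := hproj
    _ ≤ ‖T u‖ * ‖γ v - γ u‖ := real_inner_le_norm _ _
    _ = ‖γ v - γ u‖ := by rw [hT1, one_mul]

lemma exists_shorterArc_sub_cube_le (hγ : IsRegularLoop γ) :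
    ∃ K > 0, ∀ s ∈ Icc (0 : ℝ) 1, ∀ t ∈ Icc (0 : ℝ) 1,
      shorterArc γ s t - K ^ 2 * shorterArc γ s t ^ 3 / 6 ≤ ‖γ s - γ t‖ := by
  obtain ⟨K, hK0, hK⟩ := hγ.exists_norm_normalize_deriv_sub_le
  refine ⟨K, hK0, fun s hs t ht => ?_⟩
  obtain ⟨u, v, huv, harc, hchord⟩ := hγ.exists_arc_eq_shorterArc hs ht
  rw [← harc, ← hchord]
  exact hγ.arcLength_sub_cube_le_norm_sub hK huv

end IsRegularLoop

lemma one_div_sq_sub_one_div_sq_le {K l x : ℝ} (hK : 0 ≤ K) (hl : 0 < l) (hKl : K * l ≤ 1)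
    (hx : l - K ^ 2 * l ^ 3 / 6 ≤ x) : 1 / x ^ 2 - 1 / l ^ 2 ≤ K ^ 2 := by
  set e := (K * l) ^ 2 / 6 with he
  have he0 : 0 ≤ e := by positivity
  have he1 : e ≤ 1 / 6 := by
    have : (K * l) ^ 2 ≤ 1 := pow_le_one₀ (by positivity) hKl
    linarith
  have hlx : l * (1 - e) ≤ x := by
    rw [he]
    linarith
  have hlow : 0 < l * (1 - e) := mul_pos hl (by linarith)
  have hfactor : 1 ≤ (1 + 6 * e) * (1 - e) ^ 2 := by nlinarith [pow_nonneg he0 3]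
  have hsq : l ^ 2 ≤ (1 + 6 * e) * x ^ 2 :=
    calc l ^ 2 ≤ l ^ 2 * ((1 + 6 * e) * (1 - e) ^ 2) :=
          le_mul_of_one_le_right (by positivity) hfactor
      _ = (1 + 6 * e) * (l * (1 - e)) ^ 2 := by ring
      _ ≤ (1 + 6 * e) * x ^ 2 := by gcongr
  have hx0 : 0 < x := hlow.trans_le hlx
  rw [sub_le_iff_le_add, div_le_iff₀ (by positivity)]
  calc 1 = l ^ 2 / l ^ 2 := (div_self (by positivity)).symm
    _ ≤ (1 + 6 * e) * x ^ 2 / l ^ 2 := by gcongr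
    _ = (K ^ 2 + 1 / l ^ 2) * x ^ 2 := by rw [he]; field_simp; ring

namespace IsC2Knot

lemma shorterArc_eq_zero_of_eq [NormedSpace ℝ F] {γ : ℝ → F} (hγ : IsC2Knot γ) {s t : ℝ}
    (hs : s ∈ Icc (0 : ℝ) 1) (ht : t ∈ Icc (0 : ℝ) 1) (hst : γ s = γ t) : shorterArc γ s t = 0 := by
  have hL : 0 ≤ arcLength γ 1 - arcLength γ 0 :=
    sub_nonneg.2 (hγ.strictMono_arcLength.monotone zero_le_one)
  have hwrap (x : ℝ) : shorterArc γ x (x + 1) = 0 := by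
    rw [shorterArc_eq_circleDist hγ.continuous_deriv, hγ.arcLength_add_one_sub, circleDist,
      abs_of_nonneg hL, sub_self, min_eq_right hL]
  obtain ⟨n, hn⟩ := hγ.exists_int_of_eq s t hst
  have hn1 : n ≤ 1 := by
    exact_mod_cast (hn ▸ by linarith [hs.2, ht.1] : (n : ℝ) ≤ 1)
  have hn2 : -1 ≤ n := by
    exact_mod_cast (hn ▸ by linarith [hs.1, ht.2] : (-1 : ℝ) ≤ n)
  interval_cases n
  · obtain rfl : t = s + 1 := by push_cast at hn; linarith
    exact hwrap s
  · obtain rfl : s = t := by push_cast at hn; linarith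
    simp [shorterArc_eq_circleDist hγ.continuous_deriv, circleDist, hL]
  · obtain rfl : s = t + 1 := by push_cast at hn; linarith
    rw [shorterArc_comm]
    exact hwrap t

lemma exists_pos_le_norm_sub [NormedSpace ℝ F] {γ : ℝ → F} (hγ : IsC2Knot γ) {δ : ℝ} (hδ : 0 < δ) :
    ∃ m > 0, ∀ s ∈ Icc (0 : ℝ) 1, ∀ t ∈ Icc (0 : ℝ) 1, δ ≤ shorterArc γ s t → m ≤ ‖γ s - γ t‖ := by
  have hcompact : IsCompact ((Icc (0 : ℝ) 1 ×ˢ Icc (0 : ℝ) 1) ∩ {p | δ ≤ shorterArc γ p.1 p.2}) :=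
    (isCompact_Icc.prod isCompact_Icc).inter_right
      (isClosed_le continuous_const (continuous_shorterArc hγ.continuous_deriv))
  have hcont : Continuous fun p : ℝ × ℝ => ‖γ p.1 - γ p.2‖ := by
    have := hγ.contDiff.continuous
    fun_prop
  obtain ⟨m, hm0, hm⟩ := hcompact.exists_forall_le' hcont.continuousOn (a := 0) <| by
    rintro ⟨s, t⟩ ⟨⟨hs, ht⟩, hle⟩
    refine norm_pos_iff.2 (sub_ne_zero.2 fun hst => ?_)
    exact (hδ.trans_le hle).ne' (hγ.shorterArc_eq_zero_of_eq hs ht hst)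
  exact ⟨m, hm0, fun s hs t ht hle => hm (s, t) ⟨⟨hs, ht⟩, hle⟩⟩

variable [InnerProductSpace ℝ F] {γ : ℝ → F}

lemma exists_abs_one_div_sq_sub_le (hγ : IsC2Knot γ) :
    ∃ C, ∀ s ∈ Icc (0 : ℝ) 1, ∀ t ∈ Icc (0 : ℝ) 1,
      |1 / ‖γ s - γ t‖ ^ 2 - 1 / shorterArc γ s t ^ 2| ≤ C := by
  obtain ⟨K, hK0, hK⟩ := hγ.exists_shorterArc_sub_cube_le
  obtain ⟨m, hm0, hm⟩ := hγ.exists_pos_le_norm_sub (one_div_pos.2 hK0)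
  refine ⟨max (K ^ 2) (1 / m ^ 2), fun s hs t ht => ?_⟩
  have hle := hγ.norm_sub_le_shorterArc hs ht
  rcases (norm_nonneg (γ s - γ t)).trans hle |>.eq_or_lt with hd | hd
  · have hchord : ‖γ s - γ t‖ = 0 := le_antisymm (hle.trans_eq hd.symm) (norm_nonneg _)
    rw [hchord, ← hd, sub_self, abs_zero]
    positivity
  have hchord : 0 < ‖γ s - γ t‖ :=
    norm_pos_iff.2 (sub_ne_zero.2 fun hst => hd.ne' (hγ.shorterArc_eq_zero_of_eq hs ht hst))
  rw [abs_of_nonneg (sub_nonneg.2 (by gcongr))]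
  rcases le_total (shorterArc γ s t) (1 / K) with hnear | hfar
  · refine le_max_of_le_left (one_div_sq_sub_one_div_sq_le hK0.le hd ?_ (hK s hs t ht))
    rwa [← le_div_iff₀' hK0]
  · have hmle := hm s hs t ht hfar
    calc 1 / ‖γ s - γ t‖ ^ 2 - 1 / shorterArc γ s t ^ 2
        ≤ 1 / ‖γ s - γ t‖ ^ 2 := sub_le_self _ (by positivity)
      _ ≤ 1 / m ^ 2 := by gcongr
      _ ≤ max (K ^ 2) (1 / m ^ 2) := le_max_right _ _

lemma integrableOn_energyDensity (hγ : IsC2Knot γ) :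
    IntegrableOn (energyDensity γ) (Icc (0 : ℝ) 1 ×ˢ Icc (0 : ℝ) 1) := by
  obtain ⟨C, hC⟩ := hγ.exists_abs_one_div_sq_sub_le
  have hcompact : IsCompact (Icc (0 : ℝ) 1 ×ˢ Icc (0 : ℝ) 1) := isCompact_Icc.prod isCompact_Icc
  have hspeed : Continuous fun p : ℝ × ℝ => ‖deriv γ p.1‖ * ‖deriv γ p.2‖ := by
    have := hγ.continuous_deriv
    fun_prop
  refine (hspeed.continuousOn.integrableOn_compact hcompact).bdd_mul (c := C)
    (measurable_one_div_sq_sub_one_div_sq hγ.contDiff.continuous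
      hγ.continuous_deriv).aestronglyMeasurable ?_
  exact ae_restrict_of_forall_mem hcompact.measurableSet fun p hp => hC p.1 hp.1 p.2 hp.2

end IsC2Knot

end Curves

section Inversion

variable {F : Type*} [NormedAddCommGroup F] [InnerProductSpace ℝ F] {γ : ℝ → F} {c : F} {r : ℝ}

lemma hasDerivAt_inversion_comp {γ' : F} {x : ℝ} (hγ : HasDerivAt γ γ' x) (hx : γ x ≠ c) :
    HasDerivAt (EuclideanGeometry.inversion c r ∘ γ)
      ((r / dist (γ x) c) ^ 2 • (ℝ ∙ (γ x - c))ᗮ.reflection γ') x :=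
  (EuclideanGeometry.hasFDerivAt_inversion hx).comp_hasDerivAt x hγ

lemma norm_deriv_inversion_comp {x : ℝ} (hγ : DifferentiableAt ℝ γ x) (hx : γ x ≠ c) :
    ‖deriv (EuclideanGeometry.inversion c r ∘ γ) x‖ = (r / dist (γ x) c) ^ 2 * ‖deriv γ x‖ := by
  rw [(hasDerivAt_inversion_comp hγ.hasDerivAt hx).deriv, norm_smul, LinearIsometryEquiv.norm_map,
    Real.norm_of_nonneg (by positivity)]

lemma one_div_norm_sub_sq_mul_norm_deriv_inversion_comp (hγ : Differentiable ℝ γ)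
    (hc : c ∉ range γ) (hr : r ≠ 0) (s t : ℝ) :
    1 / ‖(EuclideanGeometry.inversion c r ∘ γ) s - (EuclideanGeometry.inversion c r ∘ γ) t‖ ^ 2 *
        (‖deriv (EuclideanGeometry.inversion c r ∘ γ) s‖ *
          ‖deriv (EuclideanGeometry.inversion c r ∘ γ) t‖) =
      1 / ‖γ s - γ t‖ ^ 2 * (‖deriv γ s‖ * ‖deriv γ t‖) := by
  have hne (x : ℝ) : γ x ≠ c := fun h => hc ⟨x, h⟩
  have hs := dist_ne_zero.2 (hne s)
  have ht := dist_ne_zero.2 (hne t)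
  rw [norm_deriv_inversion_comp (hγ s) (hne s), norm_deriv_inversion_comp (hγ t) (hne t),
    ← dist_eq_norm, ← dist_eq_norm, Function.comp_apply, Function.comp_apply,
    EuclideanGeometry.dist_inversion_inversion (hne s) (hne t)]
  rcases eq_or_ne (dist (γ s) (γ t)) 0 with h | h
  · simp only [h, mul_zero, ne_eq, OfNat.ofNat_ne_zero, not_false_eq_true, zero_pow, div_zero,
      zero_mul]
  · field_simp

lemma IsC2Knot.inversion_comp (hγ : IsC2Knot γ) (hc : c ∉ range γ) (hr : r ≠ 0) :
    IsC2Knot (EuclideanGeometry.inversion c r ∘ γ) where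
  contDiff := contDiff_const.inversion contDiff_const hγ.contDiff fun x h => hc ⟨x, h⟩
  periodic := hγ.periodic.comp _
  deriv_ne_zero s := by
    have hs : γ s ≠ c := fun h => hc ⟨s, h⟩
    have := dist_ne_zero.2 hs
    have := hγ.deriv_ne_zero s
    rw [← norm_ne_zero_iff, norm_deriv_inversion_comp (hγ.hasDerivAt s).differentiableAt hs]
    positivity
  exists_int_of_eq s t hst :=
    hγ.exists_int_of_eq s t (EuclideanGeometry.inversion_injective c hr hst)

theorem energy_inversion_invariant_general (hγ : IsC2Knot γ) (hc : c ∉ range γ) (hr : r ≠ 0) :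
    knotEnergy (EuclideanGeometry.inversion c r ∘ γ) = knotEnergy γ := by
  set η : ℝ → F := EuclideanGeometry.inversion c r ∘ γ
  have hη : IsC2Knot η := hγ.inversion_comp hc hr
  have hdiff (p : ℝ × ℝ) : energyDensity η p - energyDensity γ p =
      arcKernel (arcLength γ 1 - arcLength γ 0) (arcLength γ) (fun x => ‖deriv γ x‖) p.1 p.2 -
        arcKernel (arcLength η 1 - arcLength η 0) (arcLength η) (fun x => ‖deriv η x‖) p.1 p.2 := by
    rw [energyDensity_eq_sub_arcKernel hη.continuous_deriv,
      energyDensity_eq_sub_arcKernel hγ.continuous_deriv,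
      one_div_norm_sub_sq_mul_norm_deriv_inversion_comp
        (hγ.contDiff.differentiable two_ne_zero) hc hr, sub_sub_sub_cancel_left]
  have hint := hη.integrableOn_energyDensity.sub hγ.integrableOn_energyDensity
  rw [← sub_eq_zero, knotEnergy, knotEnergy,
    ← integral_sub hη.integrableOn_energyDensity hγ.integrableOn_energyDensity]
  simp only [hdiff]
  exact setIntegral_arcKernel_sub_eq_zero
    (hasDerivAt_arcLength hγ.continuous_deriv) hγ.norm_deriv_pos hγ.differentiable_norm_deriv
    (hasDerivAt_arcLength hη.continuous_deriv) hη.norm_deriv_pos hη.differentiable_norm_deriv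
    zero_lt_one (hint.congr (.of_forall hdiff))

end Inversion

lemma inv3_eq_inversion (c : E3) (r : ℝ) : inv3 c r = EuclideanGeometry.inversion c r := by
  ext1 x
  simp only [inv3, EuclideanGeometry.inversion, dist_eq_norm, div_pow, vsub_eq_sub, vadd_eq_add,
    add_comm]

/-- Möbius invariance of the energy `E⁽²⁾` (Freedman–He–Wang): the energy is unchanged
under inversion in a sphere whose center does not lie on the knot. -/
theorem energy_inversion_invariant (γ : ℝ → E3)
    (hC2 : ContDiff ℝ 2 γ)
    (hper : Function.Periodic γ 1)
    (hinj : ∀ s t : ℝ, γ s = γ t → ∃ n : ℤ, s - t = n)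
    (hreg : ∀ s : ℝ, deriv γ s ≠ 0)
    (c : E3) (hc : c ∉ Set.range γ) (r : ℝ) (hr : 0 < r) :
    energy (inv3 c r ∘ γ) = energy γ := by
  rw [inv3_eq_inversion]
  exact energy_inversion_invariant_general ⟨⟨hC2, hper, hreg⟩, hinj⟩ hc hr.ne'
end
end
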